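/- arXiv:math/0109115 — 3 statements merged into one kernel-verified Lean document; each statement's English description precedes it below -/
import Mathlib

section
/- Let x₁, x₂, ρ₁, ρ₂ : [0,∞) → ℝ be continuously differentiable, set yᵢ = xᵢ + ρᵢ and ζ = ρ₁ + 3ρ₂, and assume that for all t ≥ 0: ρ₂′(t) = 2ρ₂(t) + ρ₁(t) − ρ₂(t)(x₂(t)² + x₂(t)y₂(t) + y₂(t)²) and ζ′(t) = −2ζ(t). Then there exists a universal constant C > 0 (independent of the functions) such that |ρ₁(t)| + |ρ₂(t)| ≤ C e^{−t} (|ρ₁(0)| + |ρ₂(0)|) for all t ≥ 0. (This is the exponential contraction of the asymptotic coupling for the toy model dx₁ = (2x₁+x₂−x₁³)dt + dω, dx₂ = (2x₂+x₁−x₂³)dt, with the binding drift G chosen so that ζ satisfies ζ′ = −2ζ.) -/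
/-!
With `ζ = ρ₁ + 3 ρ₂` and `q = x₂² + x₂ y₂ + y₂² ≥ 0`, the equation for `ρ₂` reads
`ρ₂' = -ρ₂ + ζ - ρ₂ q`. For the rescaled variables `u = e^t ρ₂` and `z = e^{2t} ζ` this becomes
`u' = e^{-t} z - u q` and `z' = 0`, so `(u² + z²)' ≤ 2 e^{-t} u z ≤ e^{-t} (u² + z²)`. Since
`e^{-t}` is integrable, the weight `exp (e^{-t})`, which stays between `1` and `e`, turns
`u² + z²` into a nonincreasing Lyapunov function (`lyapunov_antitoneOn`). Hence `u` and `z` are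
bounded by a multiple of the initial data, and undoing the rescaling gives the decay rate `e^{-t}`.
-/

open Set

/-- The weighted energy of the rescaled variables `e^t r` and `e^{2t} z` is nonincreasing, where
`r` and `z` stand for `ρ₂` and `ζ`, and `q` is the nonnegative damping coefficient. -/
lemma lyapunov_antitoneOn {r z q : ℝ → ℝ} (hq : ∀ t, 0 ≤ q t)
    (hr : ∀ t ∈ Ici (0 : ℝ), HasDerivWithinAt r (-r t + z t - r t * q t) (Ici 0) t)
    (hz : ∀ t ∈ Ici (0 : ℝ), HasDerivWithinAt z (-2 * z t) (Ici 0) t) :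
    AntitoneOn (fun t => Real.exp (Real.exp (-t)) *
      ((Real.exp t * r t) ^ 2 + (Real.exp t ^ 2 * z t) ^ 2)) (Ici 0) := by
  have hF : ∀ t ∈ Ici (0 : ℝ), HasDerivWithinAt (fun t => Real.exp (Real.exp (-t)) *
      ((Real.exp t * r t) ^ 2 + (Real.exp t ^ 2 * z t) ^ 2))
      (Real.exp (Real.exp (-t)) *
        (-Real.exp (-t) * ((Real.exp t * r t) ^ 2 + (Real.exp t ^ 2 * z t) ^ 2)
          + 2 * (Real.exp t * r t) * (Real.exp t * z t)
          - 2 * (Real.exp t * r t) ^ 2 * q t)) (Ici 0) t := by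
    intro t ht
    have he := (Real.hasDerivAt_exp t).hasDerivWithinAt (s := Ici 0)
    have hw := ((hasDerivAt_neg t).exp.exp).hasDerivWithinAt (s := Ici 0)
    have h := hw.mul (((he.mul (hr t ht)).pow 2).add ((((he.pow 2).mul (hz t ht))).pow 2))
    refine h.congr_deriv ?_
    simp only [Pi.mul_apply, Pi.pow_apply, Pi.add_apply]
    push_cast
    ring
  refine antitoneOn_of_hasDerivWithinAt_nonpos (convex_Ici 0)
    (fun t ht => (hF t ht).continuousWithinAt)
    (fun t ht => (hF t (interior_subset ht)).mono interior_subset) ?_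
  intro t _
  refine mul_nonpos_of_nonneg_of_nonpos (Real.exp_pos _).le ?_
  have hinv : Real.exp (-t) * Real.exp t = 1 := by rw [← Real.exp_add]; simp
  have hez : Real.exp t * z t = Real.exp (-t) * (Real.exp t ^ 2 * z t) := by
    linear_combination (-Real.exp t * z t) * hinv
  rw [hez]
  have h1 := mul_nonneg (Real.exp_pos (-t)).le
    (sq_nonneg (Real.exp t * r t - Real.exp t ^ 2 * z t))
  have h2 := mul_nonneg (sq_nonneg (Real.exp t * r t)) (hq t)
  linarith

/-- Exponential contraction for the asymptotic coupling of the toy model: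
if `ρ₂` satisfies its coupled ODE and the binding drift forces `ζ = ρ₁ + 3ρ₂` to satisfy
`ζ' = −2ζ` on `[0,∞)`, then `|ρ₁(t)| + |ρ₂(t)| ≤ C e^{−t} (|ρ₁(0)| + |ρ₂(0)|)` for a
universal constant `C`. -/
theorem stmt14 :
    ∃ C : ℝ, 0 < C ∧
      ∀ x₁ x₂ ρ₁ ρ₂ : ℝ → ℝ,
        ContDiffOn ℝ 1 x₁ (Ici 0) → ContDiffOn ℝ 1 x₂ (Ici 0) →
        ContDiffOn ℝ 1 ρ₁ (Ici 0) → ContDiffOn ℝ 1 ρ₂ (Ici 0) →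
        (∀ t ∈ Ici (0 : ℝ), HasDerivWithinAt ρ₂
          (2 * ρ₂ t + ρ₁ t -
            ρ₂ t * ((x₂ t) ^ 2 + x₂ t * (x₂ t + ρ₂ t) + (x₂ t + ρ₂ t) ^ 2)) (Ici 0) t) →
        (∀ t ∈ Ici (0 : ℝ), HasDerivWithinAt (fun s => ρ₁ s + 3 * ρ₂ s)
          (-2 * (ρ₁ t + 3 * ρ₂ t)) (Ici 0) t) →
        ∀ t ∈ Ici (0 : ℝ), |ρ₁ t| + |ρ₂ t| ≤ C * Real.exp (-t) * (|ρ₁ 0| + |ρ₂ 0|) := by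
  -- `|ρ₁| + |ρ₂| ≤ |ζ| + 4 |ρ₂|`, and each of `|ζ|`, `|ρ₂|` is at most `8 e^{-t}` times the data.
  refine ⟨40, by norm_num, ?_⟩
  intro x₁ x₂ ρ₁ ρ₂ _ _ _ _ hr hz t ht
  have hq : ∀ t, 0 ≤ (x₂ t) ^ 2 + x₂ t * (x₂ t + ρ₂ t) + (x₂ t + ρ₂ t) ^ 2 := fun t => by
    nlinarith [sq_nonneg (x₂ t + (x₂ t + ρ₂ t)), sq_nonneg (x₂ t), sq_nonneg (x₂ t + ρ₂ t)]
  have hanti := lyapunov_antitoneOn (r := ρ₂) (z := fun s => ρ₁ s + 3 * ρ₂ s)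
    (q := fun t => (x₂ t) ^ 2 + x₂ t * (x₂ t + ρ₂ t) + (x₂ t + ρ₂ t) ^ 2)
    hq
    (fun t ht => (hr t ht).congr_deriv (by ring)) hz
  have h := hanti self_mem_Ici ht ht
  simp only [neg_zero, Real.exp_zero, one_mul, one_pow] at h
  set S := |ρ₁ 0| + |ρ₂ 0| with hS
  set u := Real.exp t * ρ₂ t with hu
  set z := Real.exp t ^ 2 * (ρ₁ t + 3 * ρ₂ t) with hzdef
  have ha := abs_nonneg (ρ₁ 0)
  have hb := abs_nonneg (ρ₂ 0)
  have hS0 : 0 ≤ S := by positivity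
  have hr0 : ρ₂ 0 ^ 2 ≤ S ^ 2 := sq_le_sq' (by linarith [neg_abs_le (ρ₂ 0)])
    (by linarith [le_abs_self (ρ₂ 0)])
  have hz0 : (ρ₁ 0 + 3 * ρ₂ 0) ^ 2 ≤ (3 * S) ^ 2 := sq_le_sq'
    (by linarith [neg_abs_le (ρ₂ 0), neg_abs_le (ρ₁ 0)])
    (by linarith [le_abs_self (ρ₂ 0), le_abs_self (ρ₁ 0)])
  have henergy : u ^ 2 + z ^ 2 ≤ (8 * S) ^ 2 := by
    have hw : 1 ≤ Real.exp (Real.exp (-t)) := Real.one_le_exp (Real.exp_pos _).le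
    have he : Real.exp 1 ≤ 3 := by linarith [Real.exp_one_lt_d9]
    calc u ^ 2 + z ^ 2 ≤ Real.exp (Real.exp (-t)) * (u ^ 2 + z ^ 2) :=
          le_mul_of_one_le_left (by positivity) hw
      _ ≤ Real.exp 1 * (ρ₂ 0 ^ 2 + (ρ₁ 0 + 3 * ρ₂ 0) ^ 2) := h
      _ ≤ 3 * (S ^ 2 + (3 * S) ^ 2) := by gcongr
      _ ≤ (8 * S) ^ 2 := by nlinarith [sq_nonneg S]
  have hu8 : |u| ≤ 8 * S :=
    abs_le_of_sq_le_sq (by linarith [sq_nonneg z]) (by positivity)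
  have hz8 : |z| ≤ 8 * S :=
    abs_le_of_sq_le_sq (by linarith [sq_nonneg u]) (by positivity)
  have hinv : Real.exp (-t) * Real.exp t = 1 := by rw [← Real.exp_add]; simp
  have hp := Real.exp_pos (-t)
  have hle : Real.exp (-t) ≤ 1 := Real.exp_le_one_iff.mpr (neg_nonpos.mpr ht)
  have hρ₂ : |ρ₂ t| ≤ Real.exp (-t) * (8 * S) := by
    have : ρ₂ t = Real.exp (-t) * u := by
      rw [hu]; linear_combination (-ρ₂ t) * hinv
    rw [this, abs_mul, abs_of_pos hp]
    gcongr
  have hζ : |ρ₁ t + 3 * ρ₂ t| ≤ Real.exp (-t) * (8 * S) := by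
    have : ρ₁ t + 3 * ρ₂ t = Real.exp (-t) * (Real.exp (-t) * z) := by
      rw [hzdef]
      linear_combination
        (-(ρ₁ t + 3 * ρ₂ t)) * (Real.exp (-t) * Real.exp t + 1) * hinv
    rw [this, abs_mul, abs_mul, abs_of_pos hp]
    exact mul_le_mul_of_nonneg_left
      ((mul_le_of_le_one_left (abs_nonneg z) hle).trans hz8) hp.le
  have htri : |ρ₁ t| ≤ |ρ₁ t + 3 * ρ₂ t| + 3 * |ρ₂ t| := by
    have := abs_sub (ρ₁ t + 3 * ρ₂ t) (3 * ρ₂ t)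
    rwa [add_sub_cancel_right, abs_mul, abs_of_pos (by norm_num : (0 : ℝ) < 3)] at this
  linarith
end

section
/- Let c₁ > 0, K ≥ 0 and T > 0, and let f : [0,T] → [0,∞) be continuous on [0,T] and differentiable on (0,T) with f′(t) ≤ −c₁ f(t)³ + K for all t ∈ (0,T). Then f(T) ≤ (2K/c₁)^{1/3} + (c₁ T)^{−1/2}. In particular the bound on f(T) is independent of the initial value f(0). -/
open Set

/-!
Put `a = (2K/c₁)^{1/3}`, so that `c₁ a³ = 2K`. Where `f > a`, the inequality gives
`f' ≤ -(c₁/2) f³ < 0`. If `f(T) > a`, then `f > a` on all of `[0,T]`: otherwise `f` would be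
nonincreasing after the last time at which `f ≤ a` and could not end above `a`. Hence
`(f⁻²)' = -2 f' / f³ ≥ c₁` on `(0,T)`, so `f(T)⁻² ≥ c₁ T`, which is `f(T) ≤ (c₁ T)^{-1/2}`
whatever the value of `f(0)`.
-/

/-- 'Coming down from infinity': if `f ≥ 0` is continuous on `[0,T]`,
differentiable on `(0,T)` with `f' ≤ −c₁ f³ + K`, then
`f(T) ≤ (2K/c₁)^{1/3} + (c₁ T)^{−1/2}`, uniformly in the initial value `f(0)`. -/
theorem stmt15 (c₁ K T : ℝ) (hc₁ : 0 < c₁) (hK : 0 ≤ K) (hT : 0 < T)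
    (f f' : ℝ → ℝ) (hfc : ContinuousOn f (Icc 0 T))
    (hfnn : ∀ t ∈ Icc 0 T, 0 ≤ f t)
    (hderiv : ∀ t ∈ Ioo 0 T, HasDerivAt f (f' t) t)
    (hineq : ∀ t ∈ Ioo 0 T, f' t ≤ -c₁ * f t ^ 3 + K) :
    f T ≤ (2 * K / c₁) ^ ((1 : ℝ) / 3) + (c₁ * T) ^ (-(1 : ℝ) / 2) := by
  have hb : 0 < (c₁ * T) ^ (-(1 : ℝ) / 2) := by positivity
  have ha0 : 0 ≤ (2 * K / c₁) ^ ((1 : ℝ) / 3) := by positivity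
  have ha3 : c₁ * ((2 * K / c₁) ^ ((1 : ℝ) / 3)) ^ 3 = 2 * K := by
    rw [← Real.rpow_natCast, ← Real.rpow_mul (by positivity)]
    norm_num
    field_simp
  have hb2 : ((c₁ * T) ^ (-(1 : ℝ) / 2)) ^ 2 = (c₁ * T)⁻¹ := by
    rw [← Real.rpow_natCast, ← Real.rpow_mul (by positivity)]
    norm_num
    rw [Real.rpow_neg_one, mul_inv, mul_comm]
  generalize (2 * K / c₁) ^ ((1 : ℝ) / 3) = a at *
  generalize (c₁ * T) ^ (-(1 : ℝ) / 2) = b at *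
  rcases le_or_gt (f T) a with h | hfT
  · linarith
  have hdecay : ∀ t ∈ Ioo 0 T, a < f t → 2 * f' t ≤ -c₁ * f t ^ 3 := by
    intro t ht hat
    have h1 := hineq t ht
    have h2 : a ^ 3 ≤ f t ^ 3 := by gcongr
    have h3 := mul_le_mul_of_nonneg_left h2 hc₁.le
    linarith
  have habove : ∀ t ∈ Icc 0 T, a < f t := by
    by_contra! hne
    have hcl : IsClosed (Icc 0 T ∩ f ⁻¹' Iic a) :=
      hfc.preimage_isClosed_of_isClosed isClosed_Icc isClosed_Iic
    -- `s` is the last time at which `f ≤ a`.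
    obtain ⟨s, ⟨hsI, hsa⟩, hsmax⟩ :=
      (isCompact_Icc.of_isClosed_subset hcl inter_subset_left).exists_isGreatest
        (by obtain ⟨t, ht, hta⟩ := hne; exact ⟨t, ht, hta⟩)
    have hsub : Icc s T ⊆ Icc 0 T := Icc_subset_Icc_left hsI.1
    have hanti : AntitoneOn f (Icc s T) := by
      apply antitoneOn_of_hasDerivWithinAt_nonpos (f' := f') (convex_Icc s T) (hfc.mono hsub)
      · intro t ht
        rw [interior_Icc] at ht
        exact (hderiv t ⟨hsI.1.trans_lt ht.1, ht.2⟩).hasDerivWithinAt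
      · intro t ht
        rw [interior_Icc] at ht
        have ht0 : t ∈ Ioo 0 T := ⟨hsI.1.trans_lt ht.1, ht.2⟩
        have hat : a < f t := by
          by_contra! hle
          exact absurd (hsmax ⟨Ioo_subset_Icc_self ht0, hle⟩) (not_le.2 ht.1)
        have h1 := hdecay t ht0 hat
        have h2 : 0 ≤ c₁ * f t ^ 3 := mul_nonneg hc₁.le (pow_nonneg (ha0.trans hat.le) 3)
        linarith
    have h1 := hanti (left_mem_Icc.2 hsI.2) (right_mem_Icc.2 hsI.2) hsI.2
    exact absurd (h1.trans hsa) (not_le.2 hfT)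
  have hpos : ∀ t ∈ Icc 0 T, 0 < f t := fun t ht => ha0.trans_lt (habove t ht)
  have hmono : MonotoneOn (fun t => (f t ^ 2)⁻¹ - c₁ * t) (Icc 0 T) := by
    apply monotoneOn_of_hasDerivWithinAt_nonneg (convex_Icc 0 T)
      (f' := fun t => -(2 * f t * f' t) / (f t ^ 2) ^ 2 - c₁)
    · exact ((hfc.pow 2).inv₀ fun t ht => (pow_pos (hpos t ht) 2).ne').sub (by fun_prop)
    · intro t ht
      rw [interior_Icc] at ht
      have hp := hpos t (Ioo_subset_Icc_self ht)
      have h1 := ((hderiv t ht).pow 2).inv (pow_pos hp 2).ne'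
      have h2 := h1.sub ((hasDerivAt_id t).const_mul c₁)
      refine HasDerivAt.hasDerivWithinAt (h2.congr_deriv ?_)
      simp
    · intro t ht
      rw [interior_Icc] at ht
      have hp := hpos t (Ioo_subset_Icc_self ht)
      have h1 := hdecay t ht (habove t (Ioo_subset_Icc_self ht))
      rw [sub_nonneg, le_div_iff₀ (by positivity)]
      nlinarith [mul_le_mul_of_nonneg_left h1 hp.le]
  have hend := hmono (left_mem_Icc.2 hT.le) (right_mem_Icc.2 hT.le) hT.le
  have h0 : 0 < (f 0 ^ 2)⁻¹ := inv_pos.2 (pow_pos (hpos 0 (left_mem_Icc.2 hT.le)) 2)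
  have hTp := hpos T (right_mem_Icc.2 hT.le)
  have hlow : c₁ * T ≤ (f T ^ 2)⁻¹ := by
    simp only [mul_zero, sub_zero] at hend
    linarith
  have hsq : f T ^ 2 ≤ b ^ 2 := by
    rw [hb2]
    exact (le_inv_comm₀ (by positivity) (by positivity)).1 hlow
  have := (pow_le_pow_iff_left₀ hTp.le hb.le two_ne_zero).1 hsq
  linarith
end

section
/- Let k ≥ 1 and let z₁, …, z_k : [0,∞) → [0,∞) be continuous functions such that z_k(t) ≤ e^{−t} z_k(0) for all t ≥ 0, and z_l(t) ≤ e^{−t} z_l(0) + (1/4) ∫₀ᵗ e^{−(t−s)} z_{l+1}(s) ds for all t ≥ 0 and all 1 ≤ l < k. Then for every γ ∈ (0,1) there exists a constant C (depending only on k and γ) such that Σ_{l=1}^{k} z_l(t) ≤ C e^{−γ t} Σ_{l=1}^{k} z_l(0) for all t ≥ 0. -/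
open Set

/-!
The weighted bound `z_l(t) ≤ M_l e^{-γ t}` is carried from `l + 1` to `l` by the elementary estimate
`∫₀ᵗ e^{-(t-s)} e^{-γ s} ds ≤ e^{-γ t} / (1 - γ)` (`integral_damped_le`). With `S = ∑ z_l(0)` and
`q = 1 / (4 (1 - γ))`, downward induction from `l = k` gives `M_l = (1 + q)^(k - l) S`, because
`1 + q (1 + q)^j ≤ (1 + q)^(j + 1)`. Summing the `k` bounds yields `C = k (1 + q)^k`.
-/

/-- A function bounded by `M e^{-γ s}` with `γ < 1` keeps this decay rate, up to the factor
`1 / (1 - γ)`, after convolution with `e^{-t}`. -/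
lemma integral_damped_le {γ M t : ℝ} (hγ1 : γ < 1) (hM : 0 ≤ M) (ht : 0 ≤ t) {f : ℝ → ℝ}
    (hf : ContinuousOn f (Ici 0)) (hb : ∀ s ∈ Ici (0 : ℝ), f s ≤ M * Real.exp (-γ * s)) :
    ∫ s in (0 : ℝ)..t, Real.exp (-(t - s)) * f s ≤ M / (1 - γ) * Real.exp (-γ * t) := by
  have hg : 0 < 1 - γ := by linarith
  have hsub : uIcc 0 t ⊆ Ici (0 : ℝ) := by
    rw [uIcc_of_le ht]
    exact Icc_subset_Ici_self
  have hmono : ∫ s in (0 : ℝ)..t, Real.exp (-(t - s)) * f s ≤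
      ∫ s in (0 : ℝ)..t, M * Real.exp (-t) * Real.exp ((1 - γ) * s) := by
    apply intervalIntegral.integral_mono_on ht
    · apply ContinuousOn.intervalIntegrable
      exact ContinuousOn.mul (by fun_prop) (hf.mono hsub)
    · exact Continuous.intervalIntegrable (by fun_prop) _ _
    · intro s hs
      calc Real.exp (-(t - s)) * f s
          ≤ Real.exp (-(t - s)) * (M * Real.exp (-γ * s)) := by
            gcongr
            exact hb s hs.1
        _ = M * (Real.exp (-(t - s)) * Real.exp (-γ * s)) := by ring
        _ = M * (Real.exp (-t) * Real.exp ((1 - γ) * s)) := by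
            rw [← Real.exp_add, ← Real.exp_add]
            ring_nf
        _ = _ := by ring
  refine hmono.trans ?_
  rw [intervalIntegral.integral_const_mul,
    intervalIntegral.integral_comp_mul_left (fun x => Real.exp x) hg.ne', integral_exp, smul_eq_mul,
    mul_zero, Real.exp_zero]
  have he : Real.exp (-γ * t) = Real.exp (-t) * Real.exp ((1 - γ) * t) := by
    rw [← Real.exp_add]
    ring_nf
  rw [he, div_eq_mul_inv]
  have hpos : 0 ≤ M * Real.exp (-t) * (1 - γ)⁻¹ := by positivity
  linarith

/-- Propagation of exponential decay through a chain of damped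
convolution inequalities: if `z_k(t) ≤ e^{−t} z_k(0)` and each `z_l` is bounded by
`e^{−t} z_l(0) + (1/4)∫₀ᵗ e^{−(t−s)} z_{l+1}(s) ds`, then for every `γ ∈ (0,1)` the whole
family decays like `C e^{−γt}` times the initial data. -/
theorem stmt16 (k : ℕ) (hk : 1 ≤ k) (γ : ℝ) (hγ0 : 0 < γ) (hγ1 : γ < 1) :
    ∃ C : ℝ, 0 < C ∧
      ∀ z : ℕ → ℝ → ℝ,
        (∀ l, 1 ≤ l → l ≤ k → ContinuousOn (z l) (Ici 0)) →
        (∀ l, 1 ≤ l → l ≤ k → ∀ t ∈ Ici (0 : ℝ), 0 ≤ z l t) →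
        (∀ t ∈ Ici (0 : ℝ), z k t ≤ Real.exp (-t) * z k 0) →
        (∀ l, 1 ≤ l → l < k → ∀ t ∈ Ici (0 : ℝ),
          z l t ≤ Real.exp (-t) * z l 0 +
            (1 / 4) * ∫ s in (0 : ℝ)..t, Real.exp (-(t - s)) * z (l + 1) s) →
        ∀ t ∈ Ici (0 : ℝ),
          ∑ l ∈ Finset.Icc 1 k, z l t ≤
            C * Real.exp (-γ * t) * ∑ l ∈ Finset.Icc 1 k, z l 0 := by
  have hg : 0 < 1 - γ := by linarith
  obtain ⟨q, hq⟩ : ∃ q : ℝ, q = 1 / (4 * (1 - γ)) := ⟨_, rfl⟩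
  have hq0 : 0 < q := by rw [hq]; positivity
  have hk0 : (0 : ℝ) < k := by exact_mod_cast hk
  refine ⟨k * (1 + q) ^ k, by positivity, ?_⟩
  intro z hc hn hlast hrec t ht
  obtain ⟨S, hS⟩ : ∃ S, S = ∑ l ∈ Finset.Icc 1 k, z l 0 := ⟨_, rfl⟩
  have hzS : ∀ l, 1 ≤ l → l ≤ k → z l 0 ≤ S := by
    intro l h1 h2
    rw [hS]
    refine Finset.single_le_sum (f := fun l => z l 0) (fun i hi => ?_) (Finset.mem_Icc.2 ⟨h1, h2⟩)
    obtain ⟨hi1, hi2⟩ := Finset.mem_Icc.1 hi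
    exact hn i hi1 hi2 0 self_mem_Ici
  have hS0 : 0 ≤ S := (hn k hk le_rfl 0 self_mem_Ici).trans (hzS k hk le_rfl)
  have hfree : ∀ l, 1 ≤ l → l ≤ k → ∀ t ∈ Ici (0 : ℝ),
      Real.exp (-t) * z l 0 ≤ S * Real.exp (-γ * t) := by
    intro l h1 h2 t ht
    have ht0 : 0 ≤ t := ht
    have hexp : Real.exp (-t) ≤ Real.exp (-γ * t) := Real.exp_le_exp.2 (by nlinarith)
    rw [mul_comm S]
    exact mul_le_mul hexp (hzS l h1 h2) (hn l h1 h2 0 self_mem_Ici) (Real.exp_pos _).le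
  have key : ∀ j l, 1 ≤ l → l + j = k → ∀ t ∈ Ici (0 : ℝ),
      z l t ≤ (1 + q) ^ j * S * Real.exp (-γ * t) := by
    intro j
    induction j with
    | zero =>
      intro l h1 h2 t ht
      obtain rfl : l = k := by omega
      simpa using (hlast t ht).trans (hfree l h1 le_rfl t ht)
    | succ j ih =>
      intro l h1 h2 t ht
      have hint := integral_damped_le (M := (1 + q) ^ j * S) hγ1 (by positivity) ht
        (hc (l + 1) (by omega) (by omega)) (ih (l + 1) (by omega) (by omega))
      have hpow : 1 ≤ (1 + q) ^ j := one_le_pow₀ (by linarith)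
      calc z l t ≤ _ := hrec l h1 (by omega) t ht
        _ ≤ S * Real.exp (-γ * t)
            + 1 / 4 * ((1 + q) ^ j * S / (1 - γ) * Real.exp (-γ * t)) := by
          exact add_le_add (hfree l h1 (by omega) t ht)
            (mul_le_mul_of_nonneg_left hint (by norm_num))
        _ = (1 + q * (1 + q) ^ j) * (S * Real.exp (-γ * t)) := by
          rw [hq]
          field_simp
        _ ≤ (1 + q) ^ (j + 1) * (S * Real.exp (-γ * t)) := by
          gcongr
          rw [pow_succ]
          linarith
        _ = _ := by ring
  rw [← hS]
  calc ∑ l ∈ Finset.Icc 1 k, z l t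
      ≤ ∑ l ∈ Finset.Icc 1 k, (1 + q) ^ k * S * Real.exp (-γ * t) := by
        refine Finset.sum_le_sum fun l hl => ?_
        obtain ⟨h1, h2⟩ := Finset.mem_Icc.1 hl
        refine (key (k - l) l h1 (by omega) t ht).trans ?_
        gcongr
        · linarith
        · omega
    _ = k * (1 + q) ^ k * Real.exp (-γ * t) * S := by
        simp
        ring
end
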